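/- A nonprincipal filter F on ω is μ_p̂-measurable if and only if there exists a family (A_n) where each A_n is a finite collection of finite subsets of ω, the unions ⋃A_n are pairwise disjoint, Σ_n μ_p̂({X ⊆ ω : ∃a ∈ A_n, a ⊆ X}) < ∞, and every X ∈ F contains some member of A_n for infinitely many n. -/

import Mathlib

open MeasureTheory Filter Set
open scoped ENNReal

/-- `μ` is the product (Bernoulli) measure on `Bool^ι` determined by the sequence `p`:
a probability measure giving each cylinder set its natural product value. -/
def IsBernoulli {ι : Type*} (μ : Measure (ι → Bool)) (p : ι → ℝ≥0∞) : Prop :=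
  IsProbabilityMeasure μ ∧
    ∀ (s : Finset ι) (f : ι → Bool),
      μ {x | ∀ i ∈ s, x i = f i} = ∏ i ∈ s, (if f i then p i else 1 - p i)

/-- The subset of `2^ω` corresponding to a filter on `ω`, via characteristic functions. -/
def filterSet (F : Filter ℕ) : Set (ℕ → Bool) := {x | {n | x n = true} ∈ F}

/-!
By the zero-one law a measurable nonprincipal filter has measure `0` or `1`. Since `p n ≤ 1 / 2`,
there is a coupling of two copies of `μ` in which the two sets are almost surely disjoint; measure
`1` would place two disjoint sets in `F`. Hence measurability of `F` means nullity, and a test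
gives nullity by Borel-Cantelli.

Conversely, a null set is covered infinitely often by sets `J i` of very small measure, where
`J i` depends only on two consecutive blocks `B i ∪ B (i + 1)` of a sequence of disjoint finite
blocks. If `F` admits no test, then for any summable sequence of sets `T i` depending on disjoint
blocks, `F` has an element outside almost all `T i`. Applied to the sets of points with a large
section of `J i`, this produces `z ∈ F` all but finitely many of whose sections are small; applied
to these sections, it produces `y ∈ F`. The point equal to `y` on even blocks and to `z` elsewhere
then lies in `F` and in only finitely many `J i`, contradicting the covering.
-/

section Piecewise

variable {ι : Type*} {X : ι → Type*}

theorem dependsOn_piecewise (S : Set ι) [∀ i, Decidable (i ∈ S)] (y : ∀ i, X i) :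
    DependsOn (fun x => S.piecewise x y) S := fun _ _ h => funext fun i =>
  ite_congr rfl (h i) fun _ => rfl

theorem piecewise_mem_iff_piecewise_swap_mem {S T : Set ι} [∀ i, Decidable (i ∈ S)]
    [∀ i, Decidable (i ∈ T)] (hST : Disjoint S T) {A : Set (∀ i, X i)}
    (hA : DependsOn (· ∈ A) (S ∪ T)) (x y : ∀ i, X i) :
    S.piecewise x y ∈ A ↔ T.piecewise y x ∈ A := by
  refine iff_of_eq (hA fun i hi => ?_)
  rcases hi with hi | hi
  · rw [piecewise_eq_of_mem _ _ _ hi, piecewise_eq_of_notMem _ _ _ (disjoint_left.1 hST hi)]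
  · rw [piecewise_eq_of_mem _ _ _ hi, piecewise_eq_of_notMem _ _ _ (disjoint_right.1 hST hi)]

end Piecewise

section ProductMeasure

variable {ι : Type*} {X : ι → Type*}

/-- All points that agree outside `S` with some point of `A`. Passing to the hull removes the
dependence of `A` on the coordinates in `S`. -/
def modificationHull (S : Set ι) (A : Set (∀ i, X i)) : Set (∀ i, X i) :=
  {x | ∃ y ∈ A, ∀ i ∉ S, x i = y i}

theorem subset_modificationHull (S : Set ι) (A : Set (∀ i, X i)) : A ⊆ modificationHull S A :=
  fun x hx => ⟨x, hx, fun _ _ => rfl⟩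

theorem dependsOn_modificationHull (S : Set ι) {T : Set ι} {A : Set (∀ i, X i)}
    (hA : DependsOn (· ∈ A) T) : DependsOn (· ∈ modificationHull S A) (T \ S) := by
  classical
  have himp : ∀ x x' : ∀ i, X i, (∀ i ∈ T \ S, x i = x' i) → x ∈ modificationHull S A →
      x' ∈ modificationHull S A := by
    rintro x x' hxx' ⟨y, hy, hxy⟩
    refine ⟨S.piecewise y x', (hA fun i hi => ?_).mp hy,
      fun i hi => (piecewise_eq_of_notMem _ _ _ hi).symm⟩
    by_cases hiS : i ∈ S
    · exact (piecewise_eq_of_mem _ _ _ hiS).symm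
    · rw [piecewise_eq_of_notMem _ _ _ hiS, ← hxy i hiS, hxx' i ⟨hi, hiS⟩]
  exact fun x x' h => propext ⟨himp x x' h, himp x' x fun i hi => (h i hi).symm⟩

variable [∀ i, MeasurableSpace (X i)]

theorem measurable_piecewise_prod (S : Set ι) [∀ i, Decidable (i ∈ S)] :
    Measurable fun z : (∀ i, X i) × (∀ i, X i) => S.piecewise z.1 z.2 := by
  refine measurable_pi_iff.2 fun i => ?_
  by_cases hi : i ∈ S
  · simp only [piecewise_eq_of_mem _ _ _ hi]
    fun_prop
  · simp only [piecewise_eq_of_notMem _ _ _ hi]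
    fun_prop

theorem measurableSet_of_dependsOn [∀ i, Countable (X i)] [∀ i, DiscreteMeasurableSpace (X i)]
    {S : Set ι} (hS : S.Finite) {A : Set (∀ i, X i)} (hA : DependsOn (· ∈ A) S) :
    MeasurableSet A := by
  lift S to Finset ι using hS
  have hpre : A = S.restrict ⁻¹' (S.restrict '' A) := by
    refine (subset_preimage_image _ _).antisymm ?_
    rintro x ⟨y, hy, hyx⟩
    exact (hA fun i hi => congrFun hyx ⟨i, hi⟩).mp hy
  rw [hpre]
  exact Finset.measurable_restrict S (S.restrict '' A).to_countable.measurableSet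

variable {ν : ∀ i, Measure (X i)} [∀ i, IsProbabilityMeasure (ν i)]

theorem measurePreserving_piecewise_infinitePi (S : Set ι) [∀ i, Decidable (i ∈ S)] :
    MeasurePreserving (fun z : (∀ i, X i) × (∀ i, X i) => S.piecewise z.1 z.2)
      ((Measure.infinitePi ν).prod (Measure.infinitePi ν)) (Measure.infinitePi ν) := by
  refine ⟨measurable_piecewise_prod S, Measure.eq_infinitePi ν fun s t ht => ?_⟩
  have hpre : (fun z : (∀ i, X i) × (∀ i, X i) => S.piecewise z.1 z.2) ⁻¹' (s : Set ι).pi t =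
      ((s.filter (· ∈ S) : Finset ι) : Set ι).pi t ×ˢ
        ((s.filter (· ∉ S) : Finset ι) : Set ι).pi t := by
    ext ⟨x, y⟩
    simp only [mem_preimage, mem_prod, Set.mem_pi, Finset.mem_coe, Finset.mem_filter]
    refine ⟨fun h => ⟨fun i hi => ?_, fun i hi => ?_⟩, fun h i hi => ?_⟩
    · simpa only [piecewise_eq_of_mem _ _ _ hi.2] using h i hi.1
    · simpa only [piecewise_eq_of_notMem _ _ _ hi.2] using h i hi.1
    · by_cases hiS : i ∈ S
      · simpa only [piecewise_eq_of_mem _ _ _ hiS] using h.1 i ⟨hi, hiS⟩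
      · simpa only [piecewise_eq_of_notMem _ _ _ hiS] using h.2 i ⟨hi, hiS⟩
  rw [Measure.map_apply (measurable_piecewise_prod S)
      (.pi s.countable_toSet fun i _ => ht i), hpre, Measure.prod_prod,
    Measure.infinitePi_pi _ fun i _ => ht i, Measure.infinitePi_pi _ fun i _ => ht i,
    Finset.prod_filter_mul_prod_filter_not]

theorem lintegral_infinitePi_piecewise_mem (S : Set ι) [∀ i, Decidable (i ∈ S)]
    {A : Set (∀ i, X i)} (hA : MeasurableSet A) :
    ∫⁻ x, Measure.infinitePi ν {y | S.piecewise x y ∈ A} ∂(Measure.infinitePi ν) =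
      Measure.infinitePi ν A := by
  rw [← (measurePreserving_piecewise_infinitePi S).measure_preimage hA.nullMeasurableSet,
    Measure.prod_apply (measurable_piecewise_prod S hA)]
  rfl

theorem meas_ge_infinitePi_piecewise_mem_le_div (S : Set ι) [∀ i, Decidable (i ∈ S)]
    {A : Set (∀ i, X i)} (hA : MeasurableSet A) {η : ℝ≥0∞} (hη : η ≠ 0) (hη' : η ≠ ⊤) :
    Measure.infinitePi ν {x | η ≤ Measure.infinitePi ν {y | S.piecewise x y ∈ A}} ≤
      Measure.infinitePi ν A / η := by
  rw [← lintegral_infinitePi_piecewise_mem (ν := ν) S hA]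
  exact meas_ge_le_lintegral_div
    (measurable_measure_prodMk_left (measurable_piecewise_prod S hA)).aemeasurable hη hη'

theorem infinitePi_eq_zero_or_one_of_forall_piecewise_mem_iff {E : Set (∀ i, X i)}
    (hE : NullMeasurableSet E (Measure.infinitePi ν))
    (hinv : ∀ (s : Set ι) [∀ i, Decidable (i ∈ s)], s.Finite →
      ∀ x y : ∀ i, X i, s.piecewise x y ∈ E ↔ y ∈ E) :
    Measure.infinitePi ν E = 0 ∨ Measure.infinitePi ν E = 1 := by
  classical
  -- `E` is independent of every finite set of coordinates, hence of all of them, itself included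
  have hrestrict : (Measure.infinitePi ν).restrict E =
      Measure.infinitePi ν E • Measure.infinitePi ν := by
    refine ext_of_generate_finite _ generateFrom_measurableCylinders.symm
      isPiSystem_measurableCylinders (fun C hC => ?_) (by simp)
    obtain ⟨s, T, hT, rfl⟩ := (mem_measurableCylinders C).1 hC
    have hpre : (fun z : (∀ i, X i) × (∀ i, X i) => (s : Set ι).piecewise z.1 z.2) ⁻¹'
        (cylinder s T ∩ E) = cylinder s T ×ˢ E := by
      ext ⟨x, y⟩
      have : s.restrict ((s : Set ι).piecewise x y) = s.restrict x :=
        funext fun i => piecewise_eq_of_mem _ _ _ i.2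
      simp only [mem_preimage, mem_inter_iff, mem_cylinder, mem_prod, this,
        hinv s s.finite_toSet x y]
    rw [Measure.restrict_apply hT.cylinder, Measure.smul_apply, smul_eq_mul, mul_comm,
      ← (measurePreserving_piecewise_infinitePi (s : Set ι)).measure_preimage
        (hT.cylinder.nullMeasurableSet.inter hE), hpre, Measure.prod_prod]
  have hsq : Measure.infinitePi ν E = Measure.infinitePi ν E * Measure.infinitePi ν E := by
    simpa only [Measure.restrict_apply_self, Measure.smul_apply, smul_eq_mul] using
      congrArg (· E) hrestrict
  refine or_iff_not_imp_left.2 fun h0 => ?_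
  exact ((ENNReal.mul_right_inj h0 (measure_ne_top _ E)).1 ((mul_one _).trans hsq)).symm

theorem exists_infinitePi_modificationHull_le_mul [∀ i, Finite (X i)]
    [∀ i, MeasurableSingletonClass (X i)] (hν : ∀ i a, ν i {a} ≠ 0) (s : Finset ι) :
    ∃ c ≠ ⊤, ∀ A, MeasurableSet A →
      Measure.infinitePi ν (modificationHull s A) ≤ c * Measure.infinitePi ν A := by
  classical
  have hne : ∀ i, Nonempty (X i) := fun i => (ν i).nonempty_of_neZero
  choose a ha using fun i => exists_eq_ciInf_of_finite (f := fun a => ν i {a})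
  have hprod : ∏ i ∈ s, ν i {a i} ≠ 0 := Finset.prod_ne_zero_iff.2 fun i _ => hν i (a i)
  -- every point of the hull of `A` has a section of `A` of measure at least `∏ i ∈ s, ν i {a i}`
  refine ⟨(∏ i ∈ s, ν i {a i})⁻¹, ENNReal.inv_ne_top.2 hprod, fun A hA => ?_⟩
  rw [mul_comm, ← div_eq_mul_inv]
  refine (measure_mono ?_).trans (meas_ge_infinitePi_piecewise_mem_le_div (s : Set ι)ᶜ hA hprod
    (ENNReal.prod_ne_top fun i _ => measure_ne_top _ _))
  rintro x ⟨y, hy, hxy⟩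
  calc ∏ i ∈ s, ν i {a i} ≤ ∏ i ∈ s, ν i {y i} :=
      Finset.prod_le_prod' fun i _ => (ha i).trans_le (iInf_le _ _)
    _ = Measure.infinitePi ν ((s : Set ι).pi fun i => {y i}) :=
      (Measure.infinitePi_pi _ fun i _ => measurableSet_singleton _).symm
    _ ≤ Measure.infinitePi ν {z | (s : Set ι)ᶜ.piecewise x z ∈ A} := by
      refine measure_mono fun z hz => ?_
      have hglue : (s : Set ι)ᶜ.piecewise x z = y := by
        ext i
        by_cases hi : i ∈ (s : Set ι)
        · exact (piecewise_eq_of_notMem _ _ _ (not_not_intro hi)).trans (hz i hi)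
        · exact (piecewise_eq_of_mem _ _ _ hi).trans (hxy i hi)
      rwa [mem_ofPred_eq, hglue]

theorem eq_infinitePi_of_measure_cylinder_eq [∀ i, Countable (X i)]
    [∀ i, MeasurableSingletonClass (X i)] {ρ : Measure (∀ i, X i)}
    (h : ∀ (s : Finset ι) (f : ∀ i, X i), ρ {x | ∀ i ∈ s, x i = f i} = ∏ i ∈ s, ν i {f i}) :
    ρ = Measure.infinitePi ν := by
  classical
  have hne : ∀ i, Nonempty (X i) := fun i => (ν i).nonempty_of_neZero
  have hproj : IsProjectiveLimit ρ fun s : Finset ι => Measure.pi fun i : s => ν i := by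
    intro s
    refine Measure.ext_of_singleton fun g => ?_
    let f : ∀ i, X i := fun i => if hi : i ∈ s then g ⟨i, hi⟩ else Classical.arbitrary (X i)
    have hpre : s.restrict ⁻¹' {g} = {x : ∀ i, X i | ∀ i ∈ s, x i = f i} := by
      ext x
      simp +contextual [f, funext_iff]
    rw [Measure.map_apply (Finset.measurable_restrict s) (measurableSet_singleton g), hpre, h,
      Measure.pi_singleton, ← Finset.prod_coe_sort]
    simp [f]
  exact hproj.unique (Measure.isProjectiveLimit_infinitePi ν)

theorem exists_forall_rel_of_forall_ae_rel [Countable ι] {ρ : ∀ i, Measure (X i × X i)}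
    [∀ i, IsProbabilityMeasure (ρ i)] {R : ∀ i, X i → X i → Prop}
    (hR : ∀ i, ∀ᵐ z ∂ρ i, R i z.1 z.2) {E : Set (∀ i, X i)}
    (hfst : ∀ᵐ x ∂(Measure.infinitePi fun i => (ρ i).map Prod.fst), x ∈ E)
    (hsnd : ∀ᵐ x ∂(Measure.infinitePi fun i => (ρ i).map Prod.snd), x ∈ E) :
    ∃ x ∈ E, ∃ y ∈ E, ∀ i, R i (x i) (y i) := by
  have hmap : ∀ g : ∀ i, X i × X i → X i, (∀ i, Measurable (g i)) →
      (∀ᵐ x ∂(Measure.infinitePi fun i => (ρ i).map (g i)), x ∈ E) →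
      ∀ᵐ z ∂(Measure.infinitePi ρ), (fun i => g i (z i)) ∈ E := fun g hg h => by
    rw [← Measure.infinitePi_map_pi ρ hg] at h
    exact ae_of_ae_map
      (measurable_pi_iff.2 fun i => (hg i).comp (measurable_pi_apply i)).aemeasurable h
  have hrel : ∀ᵐ z ∂(Measure.infinitePi ρ), ∀ i, R i (z i).1 (z i).2 :=
    ae_all_iff.2 fun i =>
      (measurePreserving_eval_infinitePi ρ i).quasiMeasurePreserving.ae (hR i)
  obtain ⟨z, hz1, hz2, hzR⟩ := ((hmap _ (fun _ => measurable_fst) hfst).and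
    ((hmap _ (fun _ => measurable_snd) hsnd).and hrel)).exists
  exact ⟨_, hz1, _, hz2, hzR⟩

end ProductMeasure

section NullCover

theorem exists_strictMono_forall_succ {P : ℕ → ℕ → ℕ → Prop} (h : ∀ i m, ∃ n > m, P i m n) :
    ∃ k : ℕ → ℕ, StrictMono k ∧ ∀ i, P i (k i) (k (i + 1)) := by
  choose f hfm hfP using h
  exact ⟨fun i => Nat.rec 0 f i, strictMono_nat_of_lt_succ fun i => hfm i _, fun i => hfP i _⟩

theorem frequently_exists_mem_Ioc_of_frequently {k : ℕ → ℕ} (hk : StrictMono k) {P : ℕ → Prop}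
    (hP : ∃ᶠ j in atTop, P j) : ∃ᶠ i in atTop, ∃ j ∈ Ioc (k i) (k (i + 1)), P j := by
  refine frequently_atTop.2 fun n => ?_
  obtain ⟨j, hj, hPj⟩ := frequently_atTop'.1 hP (k n)
  have hunbdd : ¬ BddAbove (k '' Ici n) :=
    ((Ici_infinite n).image hk.injective.injOn).not_bddAbove
  obtain ⟨i, hi, hji⟩ := mem_iUnion₂.1
    ((biUnion_Ici_Ioc_map_succ (fun i hi => hk.monotone hi) hunbdd).ge hj)
  exact ⟨i, hi, j, hji, hPj⟩

theorem exists_gt_mul_tsum_add_le {f : ℕ → ℝ≥0∞} (hf : ∑' j, f j ≠ ⊤) {c ε : ℝ≥0∞} (hc : c ≠ ⊤)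
    (hε : 0 < ε) (m : ℕ) : ∃ n > m, c * ∑' j, f (j + n) ≤ ε := by
  have hlim : Tendsto (fun n => c * ∑' j, f (j + n)) atTop (nhds 0) := by
    simpa only [mul_zero] using
      ENNReal.Tendsto.const_mul (ENNReal.tendsto_sum_nat_add f hf) (.inr hc)
  obtain ⟨n, hmn, hn⟩ := ((eventually_gt_atTop m).and (hlim.eventually_lt_const hε)).exists
  exact ⟨n, hmn, hn.le⟩

theorem measure_biUnion_Ioc_le_tsum_add {α : Type*} [MeasurableSpace α] (μ : Measure α)
    (D : ℕ → Set α) (m n : ℕ) : μ (⋃ j ∈ Ioc m n, D j) ≤ ∑' j, μ (D (j + m)) := by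
  refine (measure_mono (iUnion₂_subset fun j hj => ?_)).trans (measure_iUnion_le _)
  exact subset_iUnion_of_subset (j - m) (by rw [Nat.sub_add_cancel hj.1.le])

variable {X : ℕ → Type*}

theorem exists_disjoint_dependsOn_Iio_of_isOpen [∀ n, TopologicalSpace (X n)]
    [∀ n, DiscreteTopology (X n)] {U : Set (∀ n, X n)} (hU : IsOpen U) (n : ℕ) :
    ∃ L : ℕ → Set (∀ n, X n), (∀ j, DependsOn (· ∈ L j) (Iio j)) ∧
      Pairwise (Function.onFun Disjoint L) ∧ ⋃ j, L j = U ∧ ∀ j < n, L j = ∅ := by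
  let Q : (∀ n, X n) → Set ℕ := fun x => {m | n ≤ m ∧ PiNat.cylinder x m ⊆ U}
  refine ⟨fun j => {x | IsLeast (Q x) j}, fun j x y hxy => ?_, fun i j hij => ?_, ?_,
    fun j hj => eq_empty_of_forall_notMem fun x hx => (hx.1.1.trans_lt hj).false⟩
  · have hcyl : ∀ m ≤ j, PiNat.cylinder x m = PiNat.cylinder y m := fun m hm =>
      PiNat.mem_cylinder_iff_eq.1 fun i hi => hxy i (hi.trans_le hm)
    have hQ : ∀ m ≤ j, (m ∈ Q x ↔ m ∈ Q y) := fun m hm => by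
      simp only [Q, mem_ofPred_eq, hcyl m hm]
    simp only [mem_ofPred_eq, eq_iff_iff, IsLeast, mem_lowerBounds, hQ j le_rfl]
    refine and_congr_right fun _ => forall_congr' fun m => ?_
    rcases le_or_gt j m with hm | hm
    · simp only [hm, implies_true]
    · rw [hQ m hm.le]
  · exact disjoint_left.2 fun x hxi hxj => hij (hxi.unique hxj)
  · refine (iUnion_subset fun j x hx => hx.1.2 (PiNat.self_mem_cylinder x j)).antisymm
      fun x hx => ?_
    obtain ⟨_, ⟨y, m, rfl⟩, hxm, hmU⟩ :=
      (PiNat.isTopologicalBasis_cylinders X).exists_subset_of_mem_open hx hU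
    have hQ : (Q x).Nonempty := by
      refine ⟨max n m, le_max_left n m, (PiNat.cylinder_anti x (le_max_right n m)).trans ?_⟩
      rwa [PiNat.mem_cylinder_iff_eq.1 hxm]
    exact mem_iUnion.2 ⟨sInf (Q x), Nat.sInf_mem hQ, fun m hm => Nat.sInf_le hm⟩

variable [∀ n, MeasurableSpace (X n)]

theorem exists_dependsOn_Iio_cover_of_null [∀ n, Countable (X n)]
    [∀ n, DiscreteMeasurableSpace (X n)] {μ : Measure (∀ n, X n)} [IsFiniteMeasure μ]
    {E : Set (∀ n, X n)} (hE : μ E = 0) :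
    ∃ D : ℕ → Set (∀ n, X n), (∀ j, DependsOn (· ∈ D j) (Iio j)) ∧ ∑' j, μ (D j) ≠ ⊤ ∧
      ∀ x ∈ E, ∃ᶠ j in atTop, x ∈ D j := by
  let _ : ∀ n, TopologicalSpace (X n) := fun _ => ⊥
  have _ : ∀ n, DiscreteTopology (X n) := fun _ => ⟨rfl⟩
  have hopen : ∀ n : ℕ, ∃ U ⊇ E, IsOpen U ∧ μ U < (2⁻¹ : ℝ≥0∞) ^ n := fun n =>
    E.exists_isOpen_lt_of_lt _ (by rw [hE]; exact ENNReal.pow_pos (by simp) n)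
  choose U hEU hUo hUμ using hopen
  choose L hLdep hLdisj hLU hLempty using
    fun n => exists_disjoint_dependsOn_Iio_of_isOpen (hUo n) n
  refine ⟨fun j => ⋃ n, L n j, fun j x y hxy => ?_,
    ne_top_of_le_ne_top (ENNReal.tsum_geometric_two.trans_ne ENNReal.ofNat_ne_top) ?_,
    fun x hx => ?_⟩
  · simp only [mem_iUnion, fun n => (hLdep n j hxy)]
  · calc ∑' j, μ (⋃ n, L n j) ≤ ∑' j, ∑' n, μ (L n j) :=
          ENNReal.tsum_le_tsum fun j => measure_iUnion_le _
      _ = ∑' n, ∑' j, μ (L n j) := ENNReal.tsum_comm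
      _ = ∑' n, μ (U n) := tsum_congr fun n => by
          rw [← hLU, measure_iUnion (hLdisj n) fun j =>
            measurableSet_of_dependsOn (finite_Iio j) (hLdep n j)]
      _ ≤ ∑' n : ℕ, (2⁻¹ : ℝ≥0∞) ^ n := ENNReal.tsum_le_tsum fun n => (hUμ n).le
  · refine frequently_atTop.2 fun n => ?_
    obtain ⟨j, hj⟩ := mem_iUnion.1 ((hLU n).symm ▸ hEU n hx)
    refine ⟨j, le_of_not_gt fun hjn => ?_, mem_iUnion.2 ⟨n, hj⟩⟩
    simp only [hLempty n j hjn, mem_empty_iff_false] at hj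

theorem exists_block_cover_of_infinitePi_eq_zero [∀ n, Finite (X n)]
    [∀ n, DiscreteMeasurableSpace (X n)] {ν : ∀ n, Measure (X n)}
    [∀ n, IsProbabilityMeasure (ν n)] (hν : ∀ n a, ν n {a} ≠ 0) {E : Set (∀ n, X n)}
    (hE : Measure.infinitePi ν E = 0) {ε : ℕ → ℝ≥0∞} (hε : ∀ i, 0 < ε i) :
    ∃ B : ℕ → Set ℕ, (∀ i, (B i).Finite) ∧ Pairwise (Function.onFun Disjoint B) ∧
      ∃ J : ℕ → Set (∀ n, X n), (∀ i, DependsOn (· ∈ J i) (B i ∪ B (i + 1))) ∧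
        (∀ i, Measure.infinitePi ν (J i) ≤ ε i) ∧ ∀ x ∈ E, ∃ᶠ i in atTop, x ∈ J i := by
  obtain ⟨D, hDdep, hDsum, hDcov⟩ := exists_dependsOn_Iio_cover_of_null hE
  have hDm : ∀ j, MeasurableSet (D j) := fun j =>
    measurableSet_of_dependsOn (finite_Iio j) (hDdep j)
  choose c hc hhull using fun m => exists_infinitePi_modificationHull_le_mul hν (Finset.Iio m)
  obtain ⟨k, hk, hkε⟩ := exists_strictMono_forall_succ fun i m =>
    exists_gt_mul_tsum_add_le hDsum (hc m) (hε i) m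
  let U : ℕ → Set (∀ n, X n) := fun i => ⋃ j ∈ Ioc (k (i + 1)) (k (i + 2)), D j
  refine ⟨fun i => Ico (k i) (k (i + 1)), fun i => finite_Ico _ _,
    hk.monotone.pairwise_disjoint_on_Ico_succ,
    fun i => modificationHull (Finset.Iio (k i)) (U i), fun i => ?_, fun i => ?_, fun x hx => ?_⟩
  · have hU : DependsOn (· ∈ U i) (Iio (k (i + 2))) := fun x y hxy => by
      simp only [U, mem_iUnion, eq_iff_iff]
      exact exists₂_congr fun j hj =>
        iff_of_eq (hDdep j fun n hn => hxy n (hn.trans_le hj.2))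
    have hBU : Ico (k i) (k (i + 1)) ∪ Ico (k (i + 1)) (k (i + 2)) =
        Iio (k (i + 2)) \ (Finset.Iio (k i) : Set ℕ) := by
      rw [Ico_union_Ico_eq_Ico (hk.monotone (by lia)) (hk.monotone (by lia)), Finset.coe_Iio]
      ext n
      simp only [mem_Ico, Set.mem_sdiff, mem_Iio, not_lt, and_comm]
    exact hBU ▸ dependsOn_modificationHull _ hU
  · calc Measure.infinitePi ν (modificationHull (Finset.Iio (k i)) (U i))
        ≤ c (k i) * Measure.infinitePi ν (U i) :=
          hhull _ _ (.biUnion (to_countable _) fun j _ => hDm j)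
      _ ≤ c (k i) * ∑' j, Measure.infinitePi ν (D (j + k (i + 1))) := by
          gcongr
          exact measure_biUnion_Ioc_le_tsum_add _ D _ _
      _ ≤ ε i := hkε i
  · have hshift : StrictMono fun i => k (i + 1) := fun i j hij => hk (by lia)
    refine (frequently_exists_mem_Ioc_of_frequently hshift (hDcov x hx)).mono ?_
    rintro i ⟨j, hj, hxj⟩
    exact subset_modificationHull _ _ (mem_iUnion₂.2 ⟨j, hj, hxj⟩)

end NullCover

section FilterTest

/-- `A` witnesses that `filterSet F` is `μ`-null: the events "`x` contains a member of `A n`",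
which depend on disjoint sets of coordinates, have summable measures, and each element of `F`
realizes infinitely many of them. -/
structure IsFilterTest (μ : Measure (ℕ → Bool)) (F : Filter ℕ) (A : ℕ → Finset (Finset ℕ)) :
    Prop where
  disjoint : ∀ m n, m ≠ n → ∀ a ∈ A m, ∀ b ∈ A n, Disjoint a b
  tsum_ne_top : ∑' n, μ {x | ∃ a ∈ A n, ∀ i ∈ a, x i = true} ≠ ⊤
  infinite : ∀ X ∈ F, {n | ∃ a ∈ A n, (a : Set ℕ) ⊆ X}.Infinite

theorem IsFilterTest.measure_filterSet_eq_zero {μ : Measure (ℕ → Bool)} {F : Filter ℕ}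
    {A : ℕ → Finset (Finset ℕ)} (hA : IsFilterTest μ F A) : μ (filterSet F) = 0 := by
  refine measure_mono_null (fun x hx => ?_) (measure_limsup_atTop_eq_zero hA.tsum_ne_top)
  rw [mem_limsup_iff_frequently_mem, Nat.frequently_atTop_iff_infinite]
  exact hA.infinite _ hx

open scoped Classical in
/-- The finite sets `a ⊆ S` such that every characteristic function of a superset of `a` lies
in `T`. For `T` small, these are the candidates for the members of a filter test. -/
noncomputable def forcingSets {ι : Type*} (S : Finset ι) (T : Set (ι → Bool)) :
    Finset (Finset ι) :=
  {a ∈ S.powerset | ∀ y : ι → Bool, (∀ n ∈ a, y n = true) → y ∈ T}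

theorem mem_forcingSets {ι : Type*} {S : Finset ι} {T : Set (ι → Bool)} {a : Finset ι} :
    a ∈ forcingSets S T ↔ a ⊆ S ∧ ∀ y : ι → Bool, (∀ n ∈ a, y n = true) → y ∈ T := by
  simp only [forcingSets, Finset.mem_filter, Finset.mem_powerset]

theorem exists_notMem_of_forall_forcingSets_not_subset {ι : Type*} {S : Finset ι}
    {T : Set (ι → Bool)} {X : Set ι} (h : ∀ a ∈ forcingSets S T, ¬ (a : Set ι) ⊆ X) :
    ∃ y ∉ T, ∀ n ∈ S, n ∈ X → y n = true := by
  classical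
  by_contra! hT
  refine h (S.filter (· ∈ X)) (mem_forcingSets.2 ⟨Finset.filter_subset _ _, fun y hy => ?_⟩)
    fun n hn => (Finset.mem_filter.1 hn).2
  by_contra hyT
  obtain ⟨n, hnS, hnX, hn⟩ := hT y hyT
  exact hn (hy n (Finset.mem_filter.2 ⟨hnS, hnX⟩))

theorem tsum_ne_top_of_eventually_le {f g : ℕ → ℝ≥0∞} (hf : ∀ i, f i ≠ ⊤)
    (hfg : ∀ᶠ i in atTop, f i ≤ g i) (hg : ∑' i, g i ≠ ⊤) : ∑' i, f i ≠ ⊤ := by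
  obtain ⟨N, hN⟩ := eventually_atTop.1 hfg
  rw [← ENNReal.summable.sum_add_tsum_nat_add' (k := N)]
  refine ENNReal.add_ne_top.2 ⟨ENNReal.sum_ne_top.2 fun i _ => hf i, ne_top_of_le_ne_top hg ?_⟩
  exact (ENNReal.tsum_le_tsum fun i => hN _ (Nat.le_add_left N i)).trans
    (ENNReal.tsum_comp_le_tsum_of_injective (add_left_injective N) g)

theorem mem_filterSet_of_forall_eq_true {F : Filter ℕ} {x y w : ℕ → Bool} (hx : x ∈ filterSet F)
    (hy : y ∈ filterSet F) (hw : ∀ n, x n = true → y n = true → w n = true) : w ∈ filterSet F :=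
  mem_of_superset (inter_mem hx hy) fun n hn => hw n hn.1 hn.2

variable {F : Filter ℕ} {B : ℕ → Set ℕ}

theorem exists_mem_eventually_forall_forcingSets_not_subset {μ : Measure (ℕ → Bool)}
    (hF : ¬ ∃ A, IsFilterTest μ F A) {B : ℕ → Finset ℕ}
    (hB : Pairwise (Function.onFun Disjoint B)) {T : ℕ → Set (ℕ → Bool)}
    (hT : ∑' i, μ (T i) ≠ ⊤) :
    ∃ X ∈ F, ∀ᶠ i in atTop, ∀ a ∈ forcingSets (B i) (T i), ¬ (a : Set ℕ) ⊆ X := by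
  by_contra! hinf
  refine hF ⟨fun i => forcingSets (B i) (T i), fun i j hij a ha b hb => ?_, ?_, fun X hX => ?_⟩
  · exact (hB hij).mono (mem_forcingSets.1 ha).1 (mem_forcingSets.1 hb).1
  · refine ne_top_of_le_ne_top hT (ENNReal.tsum_le_tsum fun i => measure_mono ?_)
    rintro x ⟨a, ha, hax⟩
    exact (mem_forcingSets.1 ha).2 x hax
  · exact Nat.frequently_atTop_iff_infinite.1 (hinf X hX)

theorem exists_mem_filterSet_eventually_notMem {μ : Measure (ℕ → Bool)}
    (hF : ¬ ∃ A, IsFilterTest μ F A) (hB : ∀ i, (B i).Finite)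
    (hBdisj : Pairwise (Function.onFun Disjoint B)) {T : ℕ → Set (ℕ → Bool)}
    (hT : ∀ i, DependsOn (· ∈ T i) (B i)) (hsum : ∑' i, μ (T i) ≠ ⊤) :
    ∃ z ∈ filterSet F, ∀ᶠ i in atTop, z ∉ T i := by
  classical
  lift B to ℕ → Finset ℕ using hB
  obtain ⟨X, hX, hXT⟩ := exists_mem_eventually_forall_forcingSets_not_subset hF
    (fun i j hij => Finset.disjoint_coe.1 (hBdisj hij)) hsum
  have hy : ∀ i, ∃ y : ℕ → Bool, (∀ n ∈ B i, n ∈ X → y n = true) ∧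
      ((∀ a ∈ forcingSets (B i) (T i), ¬ (a : Set ℕ) ⊆ X) → y ∉ T i) := fun i => by
    by_cases h : ∀ a ∈ forcingSets (B i) (T i), ¬ (a : Set ℕ) ⊆ X
    · obtain ⟨y, hyT, hyX⟩ := exists_notMem_of_forall_forcingSets_not_subset h
      exact ⟨y, hyX, fun _ => hyT⟩
    · exact ⟨fun _ => true, fun _ _ _ => rfl, fun h' => absurd h' h⟩
  choose y hyX hyT using hy
  let z : ℕ → Bool := fun n => decide (∀ i, n ∈ B i → y i n = true)
  have hz : ∀ i, ∀ n ∈ B i, z n = y i n := fun i n hn => by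
    rw [Bool.eq_iff_iff, decide_eq_true_eq]
    refine ⟨fun h => h i hn, fun h j hj => ?_⟩
    rwa [← subsingleton_setOfPred_mem_iff_pairwise_disjoint.2 hBdisj n hn hj]
  refine ⟨z, mem_of_superset hX fun n hn => decide_eq_true fun i hi => hyX i n hi hn, ?_⟩
  filter_upwards [hXT] with i hi hzT
  exact hyT i hi ((hT i (hz i)).mp hzT)

theorem exists_mem_filterSet_eventually_notMem_and_notMem {μ : Measure (ℕ → Bool)}
    [IsFiniteMeasure μ] (hF : ¬ ∃ A, IsFilterTest μ F A) (hB : ∀ i, (B i).Finite)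
    (hBdisj : Pairwise (Function.onFun Disjoint B)) {T T' : ℕ → Set (ℕ → Bool)}
    (hT : ∀ i, DependsOn (· ∈ T i) (B i)) (hT' : ∀ i, DependsOn (· ∈ T' i) (B (i + 1)))
    {ε : ℕ → ℝ≥0∞} (hTε : ∀ᶠ i in atTop, μ (T i) ≤ ε i ∧ μ (T' i) ≤ ε i)
    (hε : ∑' i, ε i ≠ ⊤) :
    ∃ z ∈ filterSet F, ∀ᶠ i in atTop, z ∉ T i ∧ z ∉ T' i := by
  have hsum : ∑' i, μ (T (i + 1) ∪ T' i) ≠ ⊤ := by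
    refine tsum_ne_top_of_eventually_le (g := fun i => ε (i + 1) + ε i)
      (fun i => measure_ne_top μ _) ?_ ?_
    · filter_upwards [hTε, (tendsto_add_atTop_nat 1).eventually hTε] with i hi hi'
      exact (measure_union_le _ _).trans (add_le_add hi'.1 hi.2)
    · rw [ENNReal.tsum_add]
      exact ENNReal.add_ne_top.2 ⟨ne_top_of_le_ne_top hε
        (ENNReal.tsum_comp_le_tsum_of_injective (add_left_injective 1) ε), hε⟩
  obtain ⟨z, hzF, hz⟩ := exists_mem_filterSet_eventually_notMem hF (fun i => hB (i + 1))
    (hBdisj.comp_of_injective (add_left_injective 1))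
    (fun i x y hxy => by simp only [mem_union, hT (i + 1) hxy, hT' i hxy]) hsum
  simp only [mem_union, not_or] at hz
  refine ⟨z, hzF, Eventually.and ?_ (hz.mono fun i hi => hi.2)⟩
  rw [← map_add_atTop_eq_nat 1]
  exact hz.mono fun i hi => hi.1

variable {ν : ℕ → Measure Bool} [∀ n, IsProbabilityMeasure (ν n)] {J : ℕ → Set (ℕ → Bool)}

open scoped Classical in
theorem exists_mem_filterSet_eventually_sections_lt
    (hF : ¬ ∃ A, IsFilterTest (Measure.infinitePi ν) F A) (hB : ∀ i, (B i).Finite)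
    (hBdisj : Pairwise (Function.onFun Disjoint B)) (hJ : ∀ i, MeasurableSet (J i))
    {η : ℕ → ℝ≥0∞} (hη : ∀ i, η i ≠ 0) (hηsum : ∑' i, η i ≠ ⊤)
    (hJη : ∀ i, Measure.infinitePi ν (J i) ≤ η i * η i) :
    ∃ z ∈ filterSet F, ∀ᶠ i in atTop,
      Measure.infinitePi ν {x | (B i).piecewise z x ∈ J i} < η i ∧
        Measure.infinitePi ν {x | (B (i + 1)).piecewise z x ∈ J i} < η i := by
  have hle : ∀ (S : Set ℕ) i,
      Measure.infinitePi ν {z | η i ≤ Measure.infinitePi ν {x | S.piecewise z x ∈ J i}} ≤ η i :=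
    fun S i => (meas_ge_infinitePi_piecewise_mem_le_div S (hJ i) (hη i)
      (ENNReal.ne_top_of_tsum_ne_top hηsum i)).trans (ENNReal.div_le_of_le_mul (hJη i))
  have hdep : ∀ (S : Set ℕ) i,
      DependsOn (· ∈ {z | η i ≤ Measure.infinitePi ν {x | S.piecewise z x ∈ J i}}) S :=
    fun S i z z' hz => by
      simp only [mem_ofPred_eq, fun x => dependsOn_piecewise S x hz]
  simpa only [mem_ofPred_eq, not_le] using
    exists_mem_filterSet_eventually_notMem_and_notMem hF hB hBdisj (fun i => hdep (B i) i)
      (fun i => hdep (B (i + 1)) i) (.of_forall fun i => ⟨hle _ i, hle _ i⟩) hηsum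

open scoped Classical in
theorem exists_mem_filterSet_eventually_piecewise_notMem
    (hF : ¬ ∃ A, IsFilterTest (Measure.infinitePi ν) F A) (hB : ∀ i, (B i).Finite)
    (hBdisj : Pairwise (Function.onFun Disjoint B))
    (hJ : ∀ i, DependsOn (· ∈ J i) (B i ∪ B (i + 1)))
    {η : ℕ → ℝ≥0∞} (hηsum : ∑' i, η i ≠ ⊤) {z : ℕ → Bool}
    (hz : ∀ᶠ i in atTop, Measure.infinitePi ν {x | (B i).piecewise z x ∈ J i} < η i ∧
      Measure.infinitePi ν {x | (B (i + 1)).piecewise z x ∈ J i} < η i) :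
    ∃ y ∈ filterSet F, ∀ᶠ i in atTop,
      (B i).piecewise y z ∉ J i ∧ (B (i + 1)).piecewise y z ∉ J i := by
  have hdep : ∀ (S : Set ℕ) i, DependsOn (· ∈ {y | S.piecewise y z ∈ J i}) S :=
    fun S i y y' hy => by simp only [mem_ofPred_eq, dependsOn_piecewise S z hy]
  refine exists_mem_filterSet_eventually_notMem_and_notMem hF hB hBdisj
    (T := fun i => {y | (B i).piecewise y z ∈ J i})
    (T' := fun i => {y | (B (i + 1)).piecewise y z ∈ J i})
    (fun i => hdep _ i) (fun i => hdep _ i) (hz.mono fun i hi => ?_) hηsum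
  have hdisj : Disjoint (B i) (B (i + 1)) := hBdisj (Nat.succ_ne_self i).symm
  have hswap : ∀ y, (B i).piecewise y z ∈ J i ↔ (B (i + 1)).piecewise z y ∈ J i := fun y =>
    piecewise_mem_iff_piecewise_swap_mem hdisj (hJ i) y z
  have hswap' : ∀ y, (B (i + 1)).piecewise y z ∈ J i ↔ (B i).piecewise z y ∈ J i := fun y =>
    (piecewise_mem_iff_piecewise_swap_mem hdisj (hJ i) z y).symm
  simp only [hswap, hswap']
  exact ⟨hi.2.le, hi.1.le⟩

open scoped Classical in
theorem exists_mem_filterSet_eventually_notMem_of_piecewise_notMem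
    (hBdisj : Pairwise (Function.onFun Disjoint B))
    (hJ : ∀ i, DependsOn (· ∈ J i) (B i ∪ B (i + 1))) {y z : ℕ → Bool}
    (hy : y ∈ filterSet F) (hz : z ∈ filterSet F)
    (hyz : ∀ᶠ i in atTop, (B i).piecewise y z ∉ J i ∧ (B (i + 1)).piecewise y z ∉ J i) :
    ∃ w ∈ filterSet F, ∀ᶠ i in atTop, w ∉ J i := by
  let S : Set ℕ := ⋃ i ∈ {i | Even i}, B i
  have hS : ∀ {i n}, n ∈ B i → (n ∈ S ↔ Even i) := fun hn => by
    refine ⟨fun h => ?_, fun h => mem_iUnion₂.2 ⟨_, h, hn⟩⟩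
    obtain ⟨j, hj, hnj⟩ := mem_iUnion₂.1 h
    exact subsingleton_setOfPred_mem_iff_pairwise_disjoint.2 hBdisj _ hnj hn ▸ hj
  have hcongr : ∀ i (T : Set ℕ), (∀ n ∈ B i ∪ B (i + 1), n ∈ S ↔ n ∈ T) →
      T.piecewise y z ∉ J i → S.piecewise y z ∉ J i := fun i T hT h hS =>
    h ((hJ i fun n hn => by simp only [Set.piecewise, hT n hn]).mp hS)
  refine ⟨S.piecewise y z, mem_filterSet_of_forall_eq_true hy hz fun n hny hnz => ?_, ?_⟩
  · by_cases hn : n ∈ S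
    · rwa [piecewise_eq_of_mem _ _ _ hn]
    · rwa [piecewise_eq_of_notMem _ _ _ hn]
  · filter_upwards [hyz] with i ⟨hi, hi'⟩
    have hne : i ≠ i + 1 := (Nat.succ_ne_self i).symm
    by_cases heven : Even i
    · refine hcongr i (B i) ?_ hi
      rintro n (hn | hn)
      · simp only [hS hn, heven, hn]
      · simp only [hS hn, Nat.even_add_one, heven, disjoint_right.1 (hBdisj hne) hn,
          not_true_eq_false]
    · refine hcongr i (B (i + 1)) ?_ hi'
      rintro n (hn | hn)
      · simp only [hS hn, heven, disjoint_left.1 (hBdisj hne) hn]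
      · simp only [hS hn, Nat.even_add_one, heven, hn, not_false_eq_true]

theorem exists_isFilterTest_of_infinitePi_filterSet_eq_zero (hν : ∀ n b, ν n {b} ≠ 0)
    (h0 : Measure.infinitePi ν (filterSet F) = 0) :
    ∃ A, IsFilterTest (Measure.infinitePi ν) F A := by
  by_contra hF
  have hη : ∀ i : ℕ, (2⁻¹ : ℝ≥0∞) ^ i ≠ 0 := fun i => (ENNReal.pow_pos (by simp) i).ne'
  have hηsum := ENNReal.tsum_geometric_two.trans_ne ENNReal.ofNat_ne_top
  obtain ⟨B, hB, hBdisj, J, hJ, hJη, hJcov⟩ := exists_block_cover_of_infinitePi_eq_zero hν h0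
    (ε := fun i => 2⁻¹ ^ i * 2⁻¹ ^ i) fun i => ENNReal.mul_pos (hη i) (hη i)
  have hJm : ∀ i, MeasurableSet (J i) := fun i =>
    measurableSet_of_dependsOn ((hB i).union (hB (i + 1))) (hJ i)
  obtain ⟨z, hzF, hz⟩ :=
    exists_mem_filterSet_eventually_sections_lt hF hB hBdisj hJm hη hηsum hJη
  obtain ⟨y, hyF, hyz⟩ :=
    exists_mem_filterSet_eventually_piecewise_notMem hF hB hBdisj hJ hηsum hz
  obtain ⟨w, hwF, hw⟩ :=
    exists_mem_filterSet_eventually_notMem_of_piecewise_notMem hBdisj hJ hyF hzF hyz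
  obtain ⟨i, hwi, hwi'⟩ := ((hJcov w hwF).and_eventually hw).exists
  exact hwi' hwi

end FilterTest

section Bernoulli

variable {ι : Type*} {p : ι → ℝ≥0∞}

theorem IsBernoulli.eq_infinitePi {μ : Measure (ι → Bool)} (hμ : IsBernoulli μ p)
    {ν : ι → Measure Bool} [∀ i, IsProbabilityMeasure (ν i)]
    (hν : ∀ i b, ν i {b} = if b then p i else 1 - p i) : μ = Measure.infinitePi ν :=
  eq_infinitePi_of_measure_cylinder_eq fun s f => by simp only [hμ.2 s f, hν]

theorem IsBernoulli.exists_eq_infinitePi {μ : Measure (ι → Bool)} (hμ : IsBernoulli μ p) :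
    ∃ ν : ι → Measure Bool, (∀ i, IsProbabilityMeasure (ν i)) ∧
      (∀ i b, ν i {b} = if b then p i else 1 - p i) ∧ μ = Measure.infinitePi ν := by
  have := hμ.1
  have hprob : ∀ i, IsProbabilityMeasure (μ.map (Function.eval i)) := fun i =>
    Measure.isProbabilityMeasure_map (measurable_pi_apply i).aemeasurable
  have hmap : ∀ i b, μ.map (Function.eval i) {b} = if b then p i else 1 - p i := fun i b => by
    have h := hμ.2 {i} fun _ => b
    simp only [Finset.mem_singleton, forall_eq, Finset.prod_singleton] at h
    rwa [Measure.map_apply (measurable_pi_apply i) (measurableSet_singleton b)]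
  exact ⟨_, hprob, hmap, hμ.eq_infinitePi hmap⟩

/-- A coupling of two `p`-coin tosses which never both succeed. It is a probability measure only
for `p ≤ 1 / 2`, as the subtraction is truncated. -/
noncomputable def disjointCoinTosses (p : ℝ≥0∞) : Measure (Bool × Bool) :=
  p • Measure.dirac (true, false) + p • Measure.dirac (false, true) +
    (1 - 2 * p) • Measure.dirac (false, false)

theorem IsBernoulli.exists_mem_forall_disjoint [Countable ι] {μ : Measure (ι → Bool)}
    (hμ : IsBernoulli μ p) (hp : ∀ i, p i ≤ 1 / 2) {E : Set (ι → Bool)} (hE : ∀ᵐ x ∂μ, x ∈ E) :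
    ∃ x ∈ E, ∃ y ∈ E, ∀ i, ¬ (x i = true ∧ y i = true) := by
  have h2 : ∀ i, 2 * p i ≤ 1 := fun i => by
    simpa [ENNReal.mul_inv_cancel] using mul_le_mul_right (hp i) 2
  have hprob : ∀ i, IsProbabilityMeasure (disjointCoinTosses (p i)) := fun i => ⟨by
    simp [disjointCoinTosses, ← two_mul, add_tsub_cancel_of_le (h2 i)]⟩
  have hfail : ∀ i, p i + (1 - 2 * p i) = 1 - p i := fun i => by
    refine ENNReal.eq_sub_of_add_eq ((hp i).trans_lt (by simp)).ne ?_
    rw [add_right_comm, ← two_mul, add_tsub_cancel_of_le (h2 i)]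
  have hrel : ∀ i, ∀ᵐ z ∂disjointCoinTosses (p i), ¬ (z.1 = true ∧ z.2 = true) := fun i => by
    simp [ae_iff, disjointCoinTosses]
  have := fun i => Measure.isProbabilityMeasure_map (μ := disjointCoinTosses (p i))
    measurable_fst.aemeasurable
  have := fun i => Measure.isProbabilityMeasure_map (μ := disjointCoinTosses (p i))
    measurable_snd.aemeasurable
  refine exists_forall_rel_of_forall_ae_rel (R := fun _ a b => ¬ (a = true ∧ b = true)) hrel ?_ ?_
  · rwa [← hμ.eq_infinitePi fun i b => ?_]
    rw [Measure.map_apply measurable_fst (measurableSet_singleton b)]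
    cases b <;> simp [disjointCoinTosses, hfail]
  · rwa [← hμ.eq_infinitePi fun i b => ?_]
    rw [Measure.map_apply measurable_snd (measurableSet_singleton b)]
    cases b <;> simp [disjointCoinTosses, hfail]

theorem piecewise_mem_filterSet_iff {F : Filter ℕ} (hF : F ≤ cofinite) {S : Set ℕ}
    [∀ n, Decidable (n ∈ S)] (hS : S.Finite) (x y : ℕ → Bool) :
    S.piecewise x y ∈ filterSet F ↔ y ∈ filterSet F :=
  congr_sets <| hF <| mem_of_superset hS.compl_mem_cofinite fun n hn => by
    simp [S.piecewise_eq_of_notMem x y hn]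

theorem IsBernoulli.measure_filterSet_eq_zero_or_one {μ : Measure (ℕ → Bool)} {p : ℕ → ℝ≥0∞}
    (hμ : IsBernoulli μ p) {F : Filter ℕ} (hF : F ≤ cofinite)
    (hE : NullMeasurableSet (filterSet F) μ) : μ (filterSet F) = 0 ∨ μ (filterSet F) = 1 := by
  obtain ⟨ν, _, -, rfl⟩ := hμ.exists_eq_infinitePi
  exact infinitePi_eq_zero_or_one_of_forall_piecewise_mem_iff hE
    fun _ _ hs x y => piecewise_mem_filterSet_iff hF hs x y

theorem IsBernoulli.nullMeasurableSet_filterSet_iff {μ : Measure (ℕ → Bool)} {p : ℕ → ℝ≥0∞}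
    (hμ : IsBernoulli μ p) (hp : ∀ n, p n ≤ 1 / 2) {F : Filter ℕ} [F.NeBot] (hF : F ≤ cofinite) :
    NullMeasurableSet (filterSet F) μ ↔ μ (filterSet F) = 0 := by
  refine ⟨fun hE => (hμ.measure_filterSet_eq_zero_or_one hF hE).resolve_right fun h1 => ?_,
    NullMeasurableSet.of_null⟩
  have := hμ.1
  obtain ⟨x, hx, y, hy, hxy⟩ :=
    hμ.exists_mem_forall_disjoint hp ((prob_compl_eq_zero_iff₀ hE).2 h1)
  obtain ⟨n, hn⟩ := Filter.nonempty_of_mem (inter_mem hx hy)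
  exact hxy n hn

theorem IsBernoulli.measure_filterSet_eq_zero_iff {μ : Measure (ℕ → Bool)} {p : ℕ → ℝ≥0∞}
    (hμ : IsBernoulli μ p) (hp : ∀ n, 0 < p n ∧ p n < 1) {F : Filter ℕ} :
    μ (filterSet F) = 0 ↔ ∃ A, IsFilterTest μ F A := by
  refine ⟨fun h0 => ?_, fun ⟨A, hA⟩ => hA.measure_filterSet_eq_zero⟩
  obtain ⟨ν, _, hν, rfl⟩ := hμ.exists_eq_infinitePi
  refine exists_isFilterTest_of_infinitePi_filterSet_eq_zero (fun n b => ?_) h0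
  have hn : (if b then p n else 1 - p n) ≠ 0 := by
    cases b
    · exact (tsub_pos_of_lt (hp n).2).ne'
    · exact (hp n).1.ne'
  exact (hν n b).trans_ne hn

end Bernoulli

theorem filter_measurable_iff_tests (μ : Measure (ℕ → Bool)) (p : ℕ → ℝ≥0∞)
    (hp : ∀ n, 0 < p n ∧ p n ≤ 1 / 2) (hμ : IsBernoulli μ p)
    (F : Filter ℕ) [F.NeBot] (hF : F ≤ Filter.cofinite) :
    NullMeasurableSet (filterSet F) μ ↔
      ∃ A : ℕ → Finset (Finset ℕ),
        (∀ m n, m ≠ n → ∀ a ∈ A m, ∀ b ∈ A n, Disjoint a b) ∧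
        (∑' n, μ {x | ∃ a ∈ A n, ∀ i ∈ a, x i = true} ≠ ⊤) ∧
        (∀ X ∈ F, {n | ∃ a ∈ A n, (a : Set ℕ) ⊆ X}.Infinite) := by
  have hp_lt : ∀ n, 0 < p n ∧ p n < 1 := fun n =>
    ⟨(hp n).1, (hp n).2.trans_lt (by rw [one_div]; exact ENNReal.one_half_lt_one)⟩
  rw [hμ.nullMeasurableSet_filterSet_iff (fun n => (hp n).2) hF,
    hμ.measure_filterSet_eq_zero_iff hp_lt]
  exact exists_congr fun A => ⟨fun h => ⟨h.disjoint, h.tsum_ne_top, h.infinite⟩,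
    fun ⟨hdisj, hsum, hinf⟩ => ⟨hdisj, hsum, hinf⟩⟩
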